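/- arXiv:1412.4259 — 3 statements merged into one kernel-verified Lean document; each statement's English description precedes it below -/
import Mathlib

section
/- There exists a constant c ∈ ℕ such that for every 1-VASS V = (Q,T) there exists a finite set Y of linear path schemes over V such that: (i) for all states p,q ∈ Q and all u,v ∈ ℕ, p(u) →*_ℕ q(v) holds if and only if p(u) →^Y_ℕ q(v) holds; (ii) every ρ ∈ Y has length at most (|Q| + ‖T‖)^c; and (iii) every ρ ∈ Y has at most one cycle. -/
namespace VASS

/-- A transition of a 1-VASS: source state, integer update, target state. -/
abbrev Trans1 := ℕ × ℤ × ℕ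

/-- The norm of a transition set of a 1-VASS. -/
def tnorm1 (T : Finset Trans1) : ℕ := T.sup fun t => t.2.1.natAbs

/-- The displacement of a word of transitions. -/
def disp1 (π : List Trans1) : ℤ := (π.map fun t => t.2.1).sum

/-- `IsPathFrom1 p q π` : `π` is a path from `p` to `q`. -/
def IsPathFrom1 : ℕ → ℕ → List Trans1 → Prop
  | p, q, [] => p = q
  | p, q, t :: rest => t.1 = p ∧ IsPathFrom1 t.2.2 q rest

/-- ℕ as a subset of ℤ. -/
def NNeg : Set ℤ := {z | 0 ≤ z}

/-- `p(u) →^π_A q(v)` for a 1-VASS. -/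
def Run1 (T : Finset Trans1) (A : Set ℤ) (p : ℕ) (u : ℤ) (q : ℕ) (v : ℤ)
    (π : List Trans1) : Prop :=
  (∀ t ∈ π, t ∈ T) ∧ IsPathFrom1 p q π ∧ u ∈ A ∧ v = u + disp1 π ∧
    ∀ i, 1 ≤ i → i ≤ π.length → u + disp1 (π.take i) ∈ A

/-- `p(u) →*_A q(v)` for a 1-VASS. -/
def Reach1 (T : Finset Trans1) (A : Set ℤ) (p : ℕ) (u : ℤ) (q : ℕ) (v : ℤ) : Prop :=
  ∃ π, Run1 T A p u q v π

/-- A linear path scheme of a 1-VASS, presented as the initial segment `α₀`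
together with the list of pairs `(βᵢ, αᵢ)`. -/
abbrev LPS1 := List Trans1 × List (List Trans1 × List Trans1)

/-- The underlying word `α₀ β₁ α₁ ⋯ β_k α_k` of a linear path scheme. -/
def lpsSupport1 (ρ : LPS1) : List Trans1 :=
  ρ.1 ++ (ρ.2.map fun s => s.1 ++ s.2).flatten

/-- The length of a linear path scheme. -/
def lpsLen1 (ρ : LPS1) : ℕ := (lpsSupport1 ρ).length

/-- The number of cycles of a linear path scheme. -/
def numCycles1 (ρ : LPS1) : ℕ := ρ.2.length

/-- `ρ` is a linear path scheme from `p` to `q` over the transition set `T`. -/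
def IsLPSFrom1 (T : Finset Trans1) (p q : ℕ) (ρ : LPS1) : Prop :=
  (∀ t ∈ lpsSupport1 ρ, t ∈ T) ∧ IsPathFrom1 p q (lpsSupport1 ρ) ∧
    ∀ s ∈ ρ.2, s.1 ≠ [] ∧ ∃ r, IsPathFrom1 r r s.1

/-- The word `α₀ β₁^{e₁} α₁ ⋯ β_k^{e_k} α_k` of a linear path scheme. -/
def lpsWord1 (ρ : LPS1) (e : List ℕ) : List Trans1 :=
  ρ.1 ++ (List.zipWith (fun s n => (List.replicate n s.1).flatten ++ s.2) ρ.2 e).flatten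

/-- Membership in the language of a linear path scheme. -/
def InLang1 (ρ : LPS1) (π : List Trans1) : Prop :=
  ∃ e : List ℕ, e.length = numCycles1 ρ ∧ π = lpsWord1 ρ e

/-- `p(u) →^Y_A q(v)` for a finite set `Y` of linear path schemes. -/
def SReach1 (T : Finset Trans1) (Y : Finset LPS1) (A : Set ℤ)
    (p : ℕ) (u : ℤ) (q : ℕ) (v : ℤ) : Prop :=
  ∃ ρ ∈ Y, ∃ π, InLang1 ρ π ∧ Run1 T A p u q v π

theorem last_le (h : ℕ → ℤ) (m : ℕ) (τ : ℕ) (hs : ∀ i < τ, |h (i+1) - h i| ≤ m) (l : ℤ)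
    (h0 : h 0 ≤ l) (hτ : l < h τ) :
    ∃ a < τ, h a ≤ l ∧ l - m < h a ∧ ∀ t, a < t → t ≤ τ → l < h t := by
  induction τ with
  | zero => omega
  | succ n ih =>
    by_cases hn : h n ≤ l
    · refine ⟨n, by omega, hn, ?_, ?_⟩
      · have := hs n (by omega)
        rw [abs_le] at this
        omega
      · intro t h1 h2
        have : t = n + 1 := by omega
        rw [this]; exact hτ
    · obtain ⟨a, ha, h1, h2, h3⟩ := ih (fun i hi => hs i (by omega)) (by omega)
      refine ⟨a, by omega, h1, h2, ?_⟩
      intro t h4 h5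
      rcases Nat.lt_or_ge n t with h6 | h6
      · have : t = n + 1 := by omega
        rw [this]; exact hτ
      · exact h3 t h4 h6

theorem first_le (h : ℕ → ℤ) (m : ℕ) (τ k : ℕ) (hτk : τ ≤ k)
    (hs : ∀ i < k, |h (i+1) - h i| ≤ m) (l : ℤ)
    (hk : h k ≤ l) (hτ : l < h τ) :
    ∃ b, τ < b ∧ b ≤ k ∧ h b ≤ l ∧ l - m < h b ∧ ∀ t, τ ≤ t → t < b → l < h t := by
  obtain ⟨a, ha, h1, h2, h3⟩ := last_le (fun i => h (k - i)) m (k - τ)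
    (by
      intro i hi
      have := hs (k - (i+1)) (by omega)
      rw [show k - (i+1) + 1 = k - i by omega] at this
      rw [abs_sub_comm]; exact this) l (by simpa using hk)
    (by simp only [Nat.sub_sub_self hτk]; exact hτ)
  refine ⟨k - a, by omega, by omega, h1, h2, ?_⟩
  intro t h4 h5
  have := h3 (k - t) (by omega) (by omega)
  simpa only [Nat.sub_sub_self (show t ≤ k by omega)] using this

/-- Climbing lemma. -/
theorem climb (Q : Finset ℕ) (st : ℕ → ℕ) (h : ℕ → ℤ) (m B : ℕ) (hB : 0 < B) (k : ℕ)
    (hst : ∀ i ≤ k, st i ∈ Q)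
    (hs : ∀ i < k, |h (i+1) - h i| ≤ m) (L : ℤ) (h0 : h 0 ≤ L)
    (hk : L + (Q.card * m * B : ℕ) < h k) :
    ∃ a a' s : ℕ, a ≤ a' ∧ a' ≤ k ∧ st a = st a' ∧ h a' = h a + s ∧ 0 < s ∧ B ∣ s ∧
      s ≤ Q.card * m * B ∧ L - m < h a ∧ h a ≤ L + (Q.card * m * B : ℕ) := by
  set K := Q.card * m * B with hK
  have key : ∀ i : ℕ, ∃ a, i ≤ K → a < k ∧ h a ≤ L + i ∧ L + i - m < h a ∧
      ∀ t, a < t → t ≤ k → L + i < h t := by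
    intro i
    by_cases hi : i ≤ K
    · obtain ⟨a, h1, h2, h3, h4⟩ := last_le h m k hs (L + i) (by omega) (by omega)
      exact ⟨a, fun _ => ⟨h1, h2, h3, h4⟩⟩
    · exact ⟨0, fun h => absurd h hi⟩
  choose a ha using key
  have hc : ((Q ×ˢ Finset.range m) ×ˢ Finset.range B).card < (Finset.range (K+1)).card := by
    simp only [Finset.card_product, Finset.card_range]; omega
  obtain ⟨i, hi, j, hj, hij, he⟩ := Finset.exists_ne_map_eq_of_card_lt_of_maps_to hc
    (f := fun i => ((st (a i), (L + i - h (a i)).toNat), i % B)) (by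
      intro i hi
      have hi' : i ≤ K := by
        simp at hi; omega
      obtain ⟨h1, h2, h3, h4⟩ := ha i hi'
      simp only [Finset.coe_product, Set.mem_prod, Finset.mem_coe, Finset.mem_range]
      exact ⟨⟨hst _ h1.le, by omega⟩, Nat.mod_lt _ hB⟩)
  wlog hlt : i < j generalizing i j
  · exact this j hj i hi hij.symm he.symm (by omega)
  simp only [Finset.mem_range] at hi hj
  obtain ⟨h1, h2, h3, h4⟩ := ha i (by omega)
  obtain ⟨g1, g2, g3, g4⟩ := ha j (by omega)
  simp only [Prod.mk.injEq] at he
  obtain ⟨⟨e1, e2⟩, e3⟩ := he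
  refine ⟨a i, a j, j - i, ?_, by omega, e1, by omega, by omega, ?_, by omega, by omega, by omega⟩
  · by_contra hcon
    have := g4 (a i) (by omega) (by omega)
    omega
  · exact (Nat.modEq_iff_dvd' hlt.le).1 e3

/-- Hill lemma. -/
theorem hill (Q : Finset ℕ) (st : ℕ → ℕ) (h : ℕ → ℤ) (m : ℕ) (k τ : ℕ) (hτk : τ ≤ k)
    (hst : ∀ i ≤ k, st i ∈ Q)
    (hs : ∀ i < k, |h (i+1) - h i| ≤ m) (L : ℤ) (h0 : h 0 ≤ L) (hk : h k ≤ L)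
    (hτ : L + (Q.card * m * (Q.card * m) : ℕ) < h τ) :
    ∃ a a' b' b s : ℕ, a < a' ∧ a' ≤ b' ∧ b' < b ∧ b ≤ k ∧ st a = st a' ∧ st b = st b' ∧
      0 < s ∧ h a' = h a + s ∧ h b' = h b + s ∧
      ∀ t, a' ≤ t → t ≤ b' → h a' ≤ h t ∨ h b' ≤ h t := by
  set K := Q.card * m * (Q.card * m) with hK
  have key : ∀ i : ℕ, ∃ a, i ≤ K → a < τ ∧ h a ≤ L + i ∧ L + i - m < h a ∧
      ∀ t, a < t → t ≤ τ → L + i < h t := by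
    intro i
    by_cases hi : i ≤ K
    · obtain ⟨a, h1, h2, h3, h4⟩ := last_le h m τ (fun i hi => hs i (by omega)) (L + i)
        (by omega) (by omega)
      exact ⟨a, fun _ => ⟨h1, h2, h3, h4⟩⟩
    · exact ⟨0, fun h => absurd h hi⟩
  have key2 : ∀ i : ℕ, ∃ b, i ≤ K → τ < b ∧ b ≤ k ∧ h b ≤ L + i ∧ L + i - m < h b ∧
      ∀ t, τ ≤ t → t < b → L + i < h t := by
    intro i
    by_cases hi : i ≤ K
    · obtain ⟨a, h1, h2, h3, h4, h5⟩ := first_le h m τ k hτk hs (L + i) (by omega) (by omega)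
      exact ⟨a, fun _ => ⟨h1, h2, h3, h4, h5⟩⟩
    · exact ⟨0, fun h => absurd h hi⟩
  choose a ha using key
  choose b hb using key2
  have hc : ((Q ×ˢ Finset.range m) ×ˢ (Q ×ˢ Finset.range m)).card
      < (Finset.range (K+1)).card := by
    simp only [Finset.card_product, Finset.card_range]; omega
  obtain ⟨i, hi, j, hj, hij, he⟩ := Finset.exists_ne_map_eq_of_card_lt_of_maps_to hc
    (f := fun i => ((st (a i), (L + i - h (a i)).toNat), (st (b i), (L + i - h (b i)).toNat))) (by
      intro i hi
      have hi' : i ≤ K := by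
        simp at hi; omega
      obtain ⟨h1, h2, h3, h4⟩ := ha i hi'
      obtain ⟨g1, g2, g3, g4, g5⟩ := hb i hi'
      simp only [Finset.coe_product, Set.mem_prod, Finset.mem_coe, Finset.mem_range]
      exact ⟨⟨hst _ (by omega), by omega⟩, ⟨hst _ (by omega), by omega⟩⟩)
  wlog hlt : i < j generalizing i j
  · exact this j hj i hi hij.symm he.symm (by omega)
  simp only [Finset.mem_range] at hi hj
  obtain ⟨h1, h2, h3, h4⟩ := ha i (by omega)
  obtain ⟨g1, g2, g3, g4⟩ := ha j (by omega)
  obtain ⟨k1, k2, k3, k4, k5⟩ := hb i (by omega)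
  obtain ⟨l1, l2, l3, l4, l5⟩ := hb j (by omega)
  simp only [Prod.mk.injEq] at he
  obtain ⟨⟨e1, e2⟩, e3, e4⟩ := he
  refine ⟨a i, a j, b j, b i, j - i, ?_, by omega, ?_, by omega, e1, e3, by omega, by omega,
    by omega, ?_⟩
  · by_contra hcon
    rcases Nat.lt_or_ge (a j) (a i) with h | h
    · have := g4 (a i) h (by omega)
      omega
    · rw [show a i = a j by omega] at h2 h3 e2
      omega
  · by_contra hcon
    rcases Nat.lt_or_ge (b i) (b j) with h | h
    · have := l5 (b i) (by omega) h
      omega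
    · rw [show b i = b j by omega] at k3 k4 e4
      omega
  · intro t t1 t2
    rcases Nat.lt_or_ge (a j) t with hh | hh
    · rcases Nat.lt_or_ge t (b j) with h' | h'
      · left
        have : L + j < h t := by
          rcases Nat.lt_or_ge τ t with h'' | h''
          · exact l5 t h''.le h'
          · exact g4 t hh h''
        omega
      · right; rw [show t = b j by omega]
    · left; rw [show t = a j by omega]

/-- One step. -/
def Stp (T : Finset Trans1) (c d : ℕ × ℤ) : Prop :=
  ∃ t ∈ T, t.1 = c.1 ∧ t.2.2 = d.1 ∧ d.2 = c.2 + t.2.1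

/-- Functional runs of length k. -/
def FR (T : Finset Trans1) (k : ℕ) (f : ℕ → ℕ × ℤ) : Prop :=
  (∀ i < k, Stp T (f i) (f (i+1))) ∧ ∀ i ≤ k, 0 ≤ (f i).2

/-- Reachability in k steps. -/
def RN (T : Finset Trans1) (k : ℕ) (c d : ℕ × ℤ) : Prop :=
  ∃ f, f 0 = c ∧ f k = d ∧ FR T k f

/-- Assumptions on the VASS. -/
def OK (Q : Finset ℕ) (T : Finset Trans1) (m : ℕ) : Prop :=
  ∀ t ∈ T, t.1 ∈ Q ∧ t.2.2 ∈ Q ∧ |t.2.1| ≤ m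

theorem RN.trans {T : Finset Trans1} {a b : ℕ} {c d e : ℕ × ℤ} (h1 : RN T a c d)
    (h2 : RN T b d e) : RN T (a + b) c e := by
  obtain ⟨f, f0, f1, f2, f3⟩ := h1
  obtain ⟨g, g0, g1, g2, g3⟩ := h2
  refine ⟨fun i => if i ≤ a then f i else g (i - a), by simp [f0], ?_, ?_, ?_⟩
  · by_cases hb : b = 0
    · subst hb; simp [f1, ← g1, g0]
    · simp [hb, g1]
  · intro i hi
    rcases Nat.lt_trichotomy i a with h | h | h
    · simp only [h.le, if_true, show i + 1 ≤ a by omega]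
      exact f2 i h
    · subst h
      simp only [le_refl, if_true, show ¬ (i + 1 ≤ i) by omega, if_false]
      rw [show i + 1 - i = 0 + 1 by omega, f1, ← g0]
      exact g2 0 (by omega)
    · simp only [show ¬ (i ≤ a) by omega, show ¬ (i + 1 ≤ a) by omega, if_false]
      rw [show i + 1 - a = (i - a) + 1 by omega]
      exact g2 _ (by omega)
  · intro i hi
    dsimp only
    split_ifs with h
    · exact f3 i h
    · exact g3 _ (by omega)

theorem FR.seg {T : Finset Trans1} {k : ℕ} {f : ℕ → ℕ × ℤ} (hf : FR T k f) {i j : ℕ}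
    (hij : i ≤ j) (hj : j ≤ k) (s : ℤ) (hs : ∀ t, i ≤ t → t ≤ j → 0 ≤ (f t).2 + s) :
    RN T (j - i) ((f i).1, (f i).2 + s) ((f j).1, (f j).2 + s) := by
  refine ⟨fun t => ((f (i + t)).1, (f (i+t)).2 + s), by simp, ?_, ?_, ?_⟩
  · simp only [show i + (j - i) = j by omega]
  · intro t ht
    obtain ⟨x, x1, x2, x3, x4⟩ := hf.1 (i + t) (by omega)
    refine ⟨x, x1, x2, x3, ?_⟩
    simp only [← add_assoc]
    simp only [x4]; ring
  · intro t ht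
    exact hs _ (by omega) (by omega)

theorem FR.seg0 {T : Finset Trans1} {k : ℕ} {f : ℕ → ℕ × ℤ} (hf : FR T k f) {i j : ℕ}
    (hij : i ≤ j) (hj : j ≤ k) : RN T (j - i) (f i) (f j) := by
  have := hf.seg hij hj 0 (fun t _ h => by simpa using hf.2 t (by omega))
  simpa using this

theorem FR.segUp {T : Finset Trans1} {k : ℕ} {f : ℕ → ℕ × ℤ} (hf : FR T k f) {i j : ℕ}
    (hij : i ≤ j) (hj : j ≤ k) (s : ℤ) (hs : 0 ≤ s) :
    RN T (j - i) ((f i).1, (f i).2 + s) ((f j).1, (f j).2 + s) :=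
  hf.seg hij hj s (fun t _ h => by have := hf.2 t (by omega); omega)

theorem RN.up {T : Finset Trans1} {k : ℕ} {p q : ℕ} {u v : ℤ} (h : RN T k (p, u) (q, v))
    (s : ℤ) (hs : 0 ≤ s) : RN T k (p, u + s) (q, v + s) := by
  obtain ⟨f, f0, f1, f2⟩ := h
  have := f2.segUp (Nat.zero_le k) le_rfl s hs
  rw [f0, f1] at this
  simpa using this

theorem FR.st {Q : Finset ℕ} {T : Finset Trans1} {m k : ℕ} {f : ℕ → ℕ × ℤ} (hT : OK Q T m)
    (hf : FR T k f) (h0 : (f 0).1 ∈ Q) : ∀ i ≤ k, (f i).1 ∈ Q := by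
  intro i hi
  cases i with
  | zero => exact h0
  | succ i =>
    obtain ⟨t, h1, h2, h3, h4⟩ := hf.1 i (by omega)
    rw [← h3]; exact (hT t h1).2.1

theorem FR.stepb {Q : Finset ℕ} {T : Finset Trans1} {m k : ℕ} {f : ℕ → ℕ × ℤ} (hT : OK Q T m)
    (hf : FR T k f) : ∀ i < k, |(f (i+1)).2 - (f i).2| ≤ m := by
  intro i hi
  obtain ⟨t, h1, h2, h3, h4⟩ := hf.1 i (by omega)
  rw [h4, add_sub_cancel_left]; exact (hT t h1).2.2

theorem cut {T : Finset Trans1} {k : ℕ} {f : ℕ → ℕ × ℤ} (hf : FR T k f)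
    {a a' b' b : ℕ} {s : ℤ} (h1 : a < a') (h2 : a' ≤ b') (h3 : b' < b) (h4 : b ≤ k)
    (e1 : (f a).1 = (f a').1) (e2 : (f b).1 = (f b').1) (e3 : (f a').2 + s = (f a).2)
    (e4 : (f b').2 + s = (f b).2) (hs : ∀ t, a' ≤ t → t ≤ b' → 0 ≤ (f t).2 + s) :
    ∃ k' < k, RN T k' (f 0) (f k) := by
  have r1 := hf.seg0 (Nat.zero_le a) (by omega)
  have r2 := hf.seg h2 (by omega) s hs
  have r3 := hf.seg0 h4 le_rfl
  rw [e3, e4, ← e1, ← e2] at r2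
  exact ⟨_, by omega, (r1.trans r2).trans r3⟩

/-- Short runs. -/
theorem short {Q : Finset ℕ} {T : Finset Trans1} {m : ℕ} (hT : OK Q T m) {k p q : ℕ} {u v : ℤ}
    (hp : p ∈ Q) (h : RN T k (p, u) (q, v)) (D : ℕ) (hD : |u - v| ≤ D) :
    ∃ k', RN T k' (p, u) (q, v) ∧
      k' + 1 ≤ Q.card * (D + 2 * (Q.card * m * (Q.card * m)) + 1) := by
  classical
  have hex : ∃ k, RN T k (p, u) (q, v) := ⟨k, h⟩
  obtain ⟨f, f0, f1, hf⟩ := Nat.find_spec hex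
  have hmin : ∀ k' < Nat.find hex, ¬ RN T k' (f 0) (f (Nat.find hex)) := by
    intro k' hk'
    rw [f0, f1]
    exact Nat.find_min hex hk'
  refine ⟨Nat.find hex, Nat.find_spec hex, ?_⟩
  generalize Nat.find hex = n at *
  set K := Q.card * m * (Q.card * m) with hK
  have hst := hf.st hT (by rw [f0]; exact hp)
  have hsb := hf.stepb hT
  rw [abs_le] at hD
  have hup : ∀ i ≤ n, (f i).2 ≤ max u v + K := by
    intro τ hτ
    by_contra hcon
    obtain ⟨a, a', b', b, s, h1, h2, h3, h4, e1, e2, hs, e3, e4, hh⟩ :=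
      hill Q (fun i => (f i).1) (fun i => (f i).2) m n τ hτ hst hsb (max u v)
      (by simp [f0]) (by simp [f1]) (by simp only [← hK]; omega)
    obtain ⟨k', hk', hr⟩ := cut hf (s := -s) h1 h2 h3 h4 e1 e2 (by omega) (by omega) (by
      intro t t1 t2
      have := hf.2 a (by omega)
      have := hf.2 b (by omega)
      rcases hh t t1 t2 with h | h <;> omega)
    exact hmin k' hk' hr
  have hlo : ∀ i ≤ n, min u v - K ≤ (f i).2 := by
    intro τ hτ
    by_contra hcon
    obtain ⟨a, a', b', b, s, h1, h2, h3, h4, e1, e2, hs, e3, e4, hh⟩ :=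
      hill Q (fun i => (f i).1) (fun i => -(f i).2) m n τ hτ hst
      (by
        intro i hi
        have := hsb i hi
        rw [abs_le] at *
        omega) (-(min u v))
      (by simp [f0]) (by simp [f1]) (by simp only [← hK]; omega)
    obtain ⟨k', hk', hr⟩ := cut hf (s := s) h1 h2 h3 h4 e1 e2 (by omega) (by omega) (by
      intro t t1 t2
      have := hf.2 t (by omega)
      omega)
    exact hmin k' hk' hr
  by_contra hcon
  have hc : (Q ×ˢ Finset.Icc (min u v - K) (max u v + K)).card < (Finset.range (n+1)).card := by
    simp only [Finset.card_product, Finset.card_range, Int.card_Icc]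
    refine lt_of_le_of_lt (Nat.mul_le_mul_left _ ?_) (not_le.1 hcon)
    omega
  obtain ⟨i, hi, j, hj, hij, he⟩ := Finset.exists_ne_map_eq_of_card_lt_of_maps_to hc
    (f := f) (by
      intro i hi
      have hi' : i ≤ n := by
        simp at hi; omega
      simp only [Finset.coe_product, Set.mem_prod, Finset.mem_coe, Finset.mem_Icc]
      exact ⟨hst i hi', hlo i hi', hup i hi'⟩)
  wlog hlt : i < j generalizing i j
  · exact this j hj i hi hij.symm he.symm (by omega)
  simp only [Finset.mem_range] at hi hj
  have r1 := hf.seg0 (Nat.zero_le i) (by omega)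
  have r2 := hf.seg0 (show j ≤ n by omega) le_rfl
  rw [he] at r1
  exact hmin _ (by omega) (r1.trans r2)

/-- Climbing with multiples of b moved to the front. -/
theorem reduce {Q : Finset ℕ} {T : Finset Trans1} {m : ℕ} (hT : OK Q T m) {r q : ℕ} {v : ℤ}
    (hr : r ∈ Q) (b : ℕ) (hb : 0 < b) : ∀ (N : ℕ) (k : ℕ) (y : ℤ), (v - y).toNat ≤ N → y ≤ v →
    RN T k (r, y) (q, v) →
    ∃ e k' : ℕ, RN T k' (r, y + e * b) (q, v) ∧ y + e * b ≤ v ∧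
      v - (y + e * b) ≤ (Q.card * m * b : ℕ) := by
  intro N
  induction N with
  | zero =>
    intro k y h1 h2 h
    exact ⟨0, k, by simpa using h, by simpa using h2, by
      simp only [Nat.cast_zero, zero_mul, add_zero]; omega⟩
  | succ N ih =>
    intro k y h1 h2 h
    by_cases hle : v - y ≤ (Q.card * m * b : ℕ)
    · exact ⟨0, k, by simpa using h, by simpa using h2, by simpa using hle⟩
    · obtain ⟨f, f0, f1, hf⟩ := h
      obtain ⟨a, a', s, g1, g2, g3, g4, g5, g6, g7, -, -⟩ :=
        climb Q (fun i => (f i).1) (fun i => (f i).2) m b hb k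
        (hf.st hT (by rw [f0]; exact hr)) (hf.stepb hT) y (by simp [f0])
        (by simp only [f1]; omega)
      have r1 := hf.segUp (Nat.zero_le a) (by omega) s (by omega)
      have r2 := hf.seg0 g2 le_rfl
      rw [← g4, g3, f0] at r1
      have r3 := r1.trans r2
      rw [f1] at r3
      obtain ⟨e, k', i1, i2, i3⟩ := ih _ (y + s) (by omega) (by omega) r3
      obtain ⟨c, rfl⟩ := g6
      refine ⟨e + c, k', ?_, ?_, ?_⟩ <;>
        rw [show y + ((e + c : ℕ) : ℤ) * b = y + ((b * c : ℕ) : ℤ) + e * b by push_cast; ring]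
      · exact i1
      · exact i2
      · exact i3

/-- Decomposition of ascending runs. -/
theorem ascend {Q : Finset ℕ} {T : Finset Trans1} {m : ℕ} (hT : OK Q T m) {k p q : ℕ} {u v : ℤ}
    (hp : p ∈ Q) (h : RN T k (p, u) (q, v)) (huv : u + (Q.card * m : ℕ) < v) :
    ∃ (r : ℕ) (x : ℤ) (b e k1 k2 k3 : ℕ), 0 < b ∧ 0 < m ∧ RN T k1 (p, u) (r, x) ∧
      RN T k2 (r, x) (r, x + b) ∧ RN T k3 (r, x + e * b) (q, v) ∧
      k1 + 1 ≤ Q.card * (Q.card * m * (Q.card * m) + 2 * (Q.card * m * (Q.card * m)) + 1) ∧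
      k2 + 1 ≤ Q.card * (Q.card * m * (Q.card * m) + 2 * (Q.card * m * (Q.card * m)) + 1) ∧
      k3 + 1 ≤ Q.card * (Q.card * m * (Q.card * m) + 2 * (Q.card * m * (Q.card * m)) + 1) := by
  obtain ⟨f, f0, f1, hf⟩ := h
  have hst := hf.st hT (by rw [f0]; exact hp)
  obtain ⟨a, a', s, g1, g2, g3, g4, g5, -, g7, g8, g9⟩ :=
    climb Q (fun i => (f i).1) (fun i => (f i).2) m 1 one_pos k
    hst (hf.stepb hT) u (by simp [f0])
    (by simp only [f1]; simpa using huv)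
  rw [mul_one] at g7 g9
  have r1 := hf.seg0 (Nat.zero_le a) (by omega)
  have r2 := hf.seg0 g1 g2
  have r3 := hf.seg0 (show a ≤ k by omega) le_rfl
  have hr := hst a (by omega)
  have hfa' : f a' = ((f a).1, (f a).2 + s) := Prod.ext g3.symm g4
  rw [hfa'] at r2
  rw [f0] at r1
  rw [f1] at r3
  generalize hfa : f a = c at *
  obtain ⟨r, x⟩ := c
  dsimp only at *
  have hQ : 0 < Q.card := Finset.card_pos.2 ⟨p, hp⟩
  have hM : 0 < Q.card * m := by omega
  have hm : 0 < m := Nat.pos_of_mul_pos_left hM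
  have hmM : m ≤ Q.card * m := Nat.le_mul_of_pos_left _ hQ
  have hMM : Q.card * m ≤ Q.card * m * (Q.card * m) := Nat.le_mul_of_pos_left _ hM
  obtain ⟨e, k3, i1, i2, i3⟩ := reduce hT hr s g5 _ _ x le_rfl (by omega) r3
  have hsM : Q.card * m * s ≤ Q.card * m * (Q.card * m) := Nat.mul_le_mul_left _ g7
  obtain ⟨k1', j1, j1'⟩ := short hT hp r1 (Q.card * m * (Q.card * m)) (by rw [abs_le]; omega)
  obtain ⟨k2', j2, j2'⟩ := short hT hr r2 (Q.card * m * (Q.card * m)) (by rw [abs_le]; omega)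
  obtain ⟨k3', j3, j3'⟩ := short hT hr i1 (Q.card * m * (Q.card * m)) (by rw [abs_le]; omega)
  exact ⟨r, x, s, e, k1', k2', k3', g5, hm, j1, j2, j3, j1', j2', j3'⟩

/-- Reversal. -/
def revT (T : Finset Trans1) : Finset Trans1 := T.image fun t => (t.2.2, -t.2.1, t.1)

theorem revT_revT (T : Finset Trans1) : revT (revT T) = T := by
  simp [revT, Finset.image_image, Function.comp_def]

theorem RN.rev {T : Finset Trans1} {k : ℕ} {c d : ℕ × ℤ} (h : RN T k c d) :
    RN (revT T) k d c := by
  obtain ⟨f, f0, f1, f2, f3⟩ := h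
  refine ⟨fun i => f (k - i), by simpa using f1, by simpa using f0, ?_, ?_⟩
  · intro i hi
    obtain ⟨t, t1, t2, t3, t4⟩ := f2 (k - (i + 1)) (by omega)
    rw [show k - (i+1) + 1 = k - i by omega] at t3 t4
    refine ⟨_, Finset.mem_image_of_mem _ t1, t3, t2, ?_⟩
    dsimp only
    omega
  · intro i hi
    exact f3 _ (by omega)

theorem RN.rev' {T : Finset Trans1} {k : ℕ} {c d : ℕ × ℤ} (h : RN (revT T) k c d) :
    RN T k d c := by
  have := h.rev
  rwa [revT_revT] at this

theorem OK.rev {Q : Finset ℕ} {T : Finset Trans1} {m : ℕ} (hT : OK Q T m) :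
    OK Q (revT T) m := by
  intro t ht
  obtain ⟨t', h, rfl⟩ := Finset.mem_image.1 ht
  obtain ⟨h1, h2, h3⟩ := hT t' h
  exact ⟨h2, h1, by simpa using h3⟩

theorem disp1_append (a b : List Trans1) : disp1 (a ++ b) = disp1 a + disp1 b := by
  simp [disp1]

theorem path_append {p q r : ℕ} {a b : List Trans1} (ha : IsPathFrom1 p q a)
    (hb : IsPathFrom1 q r b) : IsPathFrom1 p r (a ++ b) := by
  induction a generalizing p with
  | nil => cases ha; exact hb
  | cons t a ih => exact ⟨ha.1, ih ha.2⟩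

theorem Run1.append {T : Finset Trans1} {p q r : ℕ} {u v w : ℤ} {a b : List Trans1}
    (ha : Run1 T NNeg p u q v a) (hb : Run1 T NNeg q v r w b) :
    Run1 T NNeg p u r w (a ++ b) := by
  obtain ⟨a1, a2, a3, a4, a5⟩ := ha
  obtain ⟨b1, b2, b3, b4, b5⟩ := hb
  refine ⟨?_, path_append a2 b2, a3, ?_, ?_⟩
  · intro t ht
    rcases List.mem_append.1 ht with h | h
    · exact a1 t h
    · exact b1 t h
  · rw [disp1_append]; omega
  · intro i h1 h2
    rw [List.length_append] at h2
    rcases Nat.lt_or_ge a.length i with h | h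
    · rw [List.take_append, List.take_of_length_le h.le, disp1_append, ← add_assoc, ← a4]
      exact b5 _ (by omega) (by omega)
    · rw [List.take_append_of_le_length h]
      exact a5 i h1 h

theorem Run1.nil {T : Finset Trans1} {p : ℕ} {u : ℤ} (h : 0 ≤ u) : Run1 T NNeg p u p u [] := by
  refine ⟨by simp, rfl, h, by simp [disp1], ?_⟩
  intro i h1 h2
  simp at h2; omega

theorem Run1.up {T : Finset Trans1} {p q : ℕ} {u v : ℤ} {a : List Trans1}
    (ha : Run1 T NNeg p u q v a) (s : ℤ) (hs : 0 ≤ s) :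
    Run1 T NNeg p (u + s) q (v + s) a := by
  obtain ⟨a1, a2, a3, a4, a5⟩ := ha
  refine ⟨a1, a2, ?_, by omega, ?_⟩
  · simp only [NNeg, Set.mem_ofPred_eq] at *; omega
  · intro i h1 h2
    have := a5 i h1 h2
    simp only [NNeg, Set.mem_ofPred_eq] at *; omega

theorem Run1.single {T : Finset Trans1} {t : Trans1} {u : ℤ} (ht : t ∈ T) (hu : 0 ≤ u)
    (hv : 0 ≤ u + t.2.1) : Run1 T NNeg t.1 u t.2.2 (u + t.2.1) [t] := by
  refine ⟨by simpa using ht, ⟨rfl, rfl⟩, hu, by simp [disp1], ?_⟩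
  intro i h1 h2
  have : i = 1 := by simp at h2; omega
  subst this
  simpa [disp1, NNeg] using hv

theorem Run1.nonneg {T : Finset Trans1} {p q : ℕ} {u v : ℤ} {a : List Trans1}
    (ha : Run1 T NNeg p u q v a) : 0 ≤ v := by
  obtain ⟨a1, a2, a3, a4, a5⟩ := ha
  cases a with
  | nil => simp [disp1] at a4; rw [a4]; exact a3
  | cons t a =>
    have := a5 (t :: a).length (by simp) le_rfl
    rw [List.take_length, ← a4] at this
    exact this

theorem RN.word {T : Finset Trans1} {k : ℕ} {c d : ℕ × ℤ} (h : RN T k c d) :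
    ∃ π, π.length = k ∧ Run1 T NNeg c.1 c.2 d.1 d.2 π := by
  obtain ⟨f, rfl, rfl, hf⟩ := h
  induction k with
  | zero => exact ⟨[], rfl, Run1.nil (hf.2 0 le_rfl)⟩
  | succ k ih =>
    obtain ⟨π, h1, h2⟩ := ih ⟨fun i hi => hf.1 i (by omega), fun i hi => hf.2 i (by omega)⟩
    obtain ⟨t, t1, t2, t3, t4⟩ := hf.1 k (by omega)
    have := Run1.single t1 (hf.2 k (by omega)) (by rw [← t4]; exact hf.2 (k+1) le_rfl)
    rw [t2, t3, ← t4] at this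
    exact ⟨π ++ [t], by simp [h1], h2.append this⟩

theorem Run1.toRN {T : Finset Trans1} {p q : ℕ} {u v : ℤ} {a : List Trans1}
    (ha : Run1 T NNeg p u q v a) : RN T a.length (p, u) (q, v) := by
  induction a generalizing p u with
  | nil =>
    obtain ⟨a1, a2, a3, a4, a5⟩ := ha
    have a2' : p = q := a2
    subst a2'
    simp [disp1] at a4
    subst a4
    exact ⟨fun _ => (p, v), rfl, rfl, by simp, fun _ _ => a3⟩
  | cons t a ih =>
    obtain ⟨a1, a2, a3, a4, a5⟩ := ha
    have h1 : 0 ≤ u + t.2.1 := by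
      have := a5 1 le_rfl (by simp)
      simpa [disp1, NNeg] using this
    have r2 : RN T a.length (t.2.2, u + t.2.1) (q, v) := by
      apply ih
      refine ⟨fun x hx => a1 x (by simp [hx]), a2.2, h1, ?_, ?_⟩
      · rw [a4]; simp [disp1]; ring
      · intro i i1 i2
        have := a5 (i+1) (by omega) (by simpa using i2)
        simpa [disp1, add_assoc] using this
    have r1 : RN T 1 (p, u) (t.2.2, u + t.2.1) := by
      refine ⟨fun i => if i = 0 then (p, u) else (t.2.2, u + t.2.1), rfl, rfl, ?_, ?_⟩
      · intro i hi
        have : i = 0 := by omega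
        subst this
        exact ⟨t, a1 t (by simp), a2.1, rfl, rfl⟩
      · intro i hi
        dsimp only
        split_ifs
        · exact a3
        · exact h1
    have := r1.trans r2
    rwa [add_comm] at this

theorem pow_up {T : Finset Trans1} {r : ℕ} {x : ℤ} {b : ℕ} {β : List Trans1} (hx : 0 ≤ x)
    (h : Run1 T NNeg r x r (x + b) β) (e : ℕ) :
    Run1 T NNeg r x r (x + e * b) (List.replicate e β).flatten := by
  induction e with
  | zero => simpa using Run1.nil hx
  | succ e ih =>
    have h2 := ih.up b (by omega)
    have := h.append h2
    rw [List.replicate_succ, List.flatten_cons]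
    convert this using 1
    push_cast; ring

theorem pow_down {T : Finset Trans1} {r : ℕ} {x : ℤ} {b : ℕ} {β : List Trans1} (hx : 0 ≤ x)
    (h : Run1 T NNeg r (x + b) r x β) (e : ℕ) :
    Run1 T NNeg r (x + e * b) r x (List.replicate e β).flatten := by
  induction e with
  | zero => simpa using Run1.nil hx
  | succ e ih =>
    have h2 := h.up (e * b) (by positivity)
    have := h2.append ih
    rw [List.replicate_succ, List.flatten_cons]
    convert this using 1
    push_cast; ring

/-- The candidate set of schemes. -/
def Yset (T : Finset Trans1) (L : ℕ) : Set LPS1 :=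
  {ρ | (∃ p q, IsLPSFrom1 T p q ρ) ∧ lpsLen1 ρ ≤ L ∧ numCycles1 ρ ≤ 1}

theorem words_finite (T : Finset Trans1) (L : ℕ) :
    {l : List Trans1 | (∀ t ∈ l, t ∈ T) ∧ l.length ≤ L}.Finite := by
  refine ((List.finite_length_le (↥T) L).image (List.map Subtype.val)).subset ?_
  rintro l ⟨h1, h2⟩
  lift l to List ↥T using h1
  exact ⟨l, by simpa using h2, rfl⟩

theorem Yset_finite (T : Finset Trans1) (L : ℕ) : (Yset T L).Finite := by
  have hW := words_finite T L
  set W := {l : List Trans1 | (∀ t ∈ l, t ∈ T) ∧ l.length ≤ L} with hWd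
  refine ((hW.image (fun a => ((a, []) : LPS1))).union
    ((hW.prod (hW.prod hW)).image (fun x => ((x.1, [(x.2.1, x.2.2)]) : LPS1)))).subset ?_
  rintro ⟨a, l⟩ ⟨⟨p, q, h1, -, -⟩, h2, h3⟩
  match l, h3 with
  | [], _ =>
    left
    refine ⟨a, ⟨?_, ?_⟩, rfl⟩
    · intro t ht; exact h1 t (by simp [lpsSupport1, ht])
    · simpa [lpsLen1, lpsSupport1] using h2
  | [(b, c)], _ =>
    right
    simp only [lpsLen1, lpsSupport1, List.map_cons, List.map_nil, List.flatten_cons,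
      List.flatten_nil, List.append_nil, List.length_append] at h2
    refine ⟨(a, b, c), ⟨⟨?_, ?_⟩, ⟨?_, ?_⟩, ⟨?_, ?_⟩⟩, rfl⟩
    · intro t ht; exact h1 t (by simp [lpsSupport1, ht])
    · dsimp only; omega
    · intro t ht; exact h1 t (by simp [lpsSupport1, ht])
    · dsimp only; omega
    · intro t ht; exact h1 t (by simp [lpsSupport1, ht])
    · dsimp only; omega
  | _ :: _ :: _, h => simp [numCycles1] at h

theorem mk_scheme {T : Finset Trans1} {L p q r : ℕ} {u v x y x' y' : ℤ} {α β γ : List Trans1}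
    {e : ℕ} (h1 : Run1 T NNeg p u r x α) (h2 : Run1 T NNeg r x' r y' β) (hne : x' ≠ y')
    (h2' : Run1 T NNeg r x r y (List.replicate e β).flatten) (h3 : Run1 T NNeg r y q v γ)
    (hL : α.length + β.length + γ.length ≤ L) :
    ∃ ρ ∈ Yset T L, ∃ π, InLang1 ρ π ∧ Run1 T NNeg p u q v π := by
  refine ⟨(α, [(β, γ)]), ⟨⟨p, q, ?_, ?_, ?_⟩, ?_, ?_⟩, _, ⟨[e], ?_, rfl⟩, ?_⟩
  · intro t ht
    simp only [lpsSupport1, List.map_cons, List.map_nil, List.flatten_cons,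
      List.flatten_nil, List.append_nil, List.mem_append] at ht
    rcases ht with h | h | h
    · exact h1.1 t h
    · exact h2.1 t h
    · exact h3.1 t h
  · simpa [lpsSupport1] using path_append h1.2.1 (path_append h2.2.1 h3.2.1)
  · simp only [List.mem_singleton]
    rintro s rfl
    refine ⟨?_, r, h2.2.1⟩
    rintro h
    dsimp only at h
    subst h
    apply hne
    have := h2.2.2.2.1
    simp [disp1] at this
    exact this.symm
  · simp [lpsLen1, lpsSupport1]; omega
  · simp [numCycles1]
  · simp [numCycles1]
  · simpa [lpsWord1] using h1.append (h2'.append h3)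

theorem bound_one {n m k : ℕ} (h : k + 1 ≤ n * (n * m * (n * m) + 2 * (n * m * (n * m)) + 1)) 
    (hN : 2 ≤ n + m) : k ≤ 4 * (n + m) ^ 5 := by
  have h1 : n ≤ n + m := by omega
  have h2 : m ≤ n + m := by omega
  set N := n + m
  have h3 : n * m * (n * m) ≤ N * N * (N * N) := by gcongr
  have h4 : 1 ≤ N * N * (N * N) := by
    have : 0 < N := by omega
    have : 0 < N * N * (N * N) := by positivity
    omega
  calc k ≤ n * (n * m * (n * m) + 2 * (n * m * (n * m)) + 1) := by omega
    _ ≤ N * (4 * (N * N * (N * N))) := by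
      apply Nat.mul_le_mul h1; omega
    _ = 4 * N ^ 5 := by ring

theorem pow_nine {N : ℕ} (hN : 2 ≤ N) : 12 * N ^ 5 ≤ N ^ 9 := by
  have : 2 ^ 4 ≤ N ^ 4 := Nat.pow_le_pow_left hN 4
  calc 12 * N ^ 5 ≤ N ^ 4 * N ^ 5 := Nat.mul_le_mul_right _ (by omega)
    _ = N ^ 9 := by ring

theorem main_dir {Q : Finset ℕ} {T : Finset Trans1} {m : ℕ} (hT : OK Q T m) {k p q : ℕ} {u v : ℤ}
    (hp : p ∈ Q) (hq : q ∈ Q) (h : RN T k (p, u) (q, v)) :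
    ∃ ρ ∈ Yset T ((Q.card + m) ^ 9), ∃ π, InLang1 ρ π ∧ Run1 T NNeg p u q v π := by
  have hQ : 0 < Q.card := Finset.card_pos.2 ⟨p, hp⟩
  by_cases hup : u + (Q.card * m : ℕ) < v
  · obtain ⟨r, x, b, e, k1, k2, k3, hb, hm, r1, r2, r3, l1, l2, l3⟩ := ascend hT hp h hup
    obtain ⟨α, a1, a2⟩ := r1.word
    obtain ⟨β, b1, b2⟩ := r2.word
    obtain ⟨γ, c1, c2⟩ := r3.word
    have hN : 2 ≤ Q.card + m := by omega
    have := bound_one l1 hN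
    have := bound_one l2 hN
    have := bound_one l3 hN
    have := pow_nine hN
    exact mk_scheme a2 b2 (by simp; omega) (pow_up a2.nonneg b2 e) c2 (by omega)
  by_cases hdn : v + (Q.card * m : ℕ) < u
  · obtain ⟨r, x, b, e, k1, k2, k3, hb, hm, r1, r2, r3, l1, l2, l3⟩ := ascend hT.rev hq h.rev hdn
    obtain ⟨α, a1, a2⟩ := r1.rev'.word
    obtain ⟨β, b1, b2⟩ := r2.rev'.word
    obtain ⟨γ, c1, c2⟩ := r3.rev'.word
    have hN : 2 ≤ Q.card + m := by omega
    have := bound_one l1 hN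
    have := bound_one l2 hN
    have := bound_one l3 hN
    have := pow_nine hN
    exact mk_scheme c2 b2 (by simp; omega) (pow_down b2.nonneg b2 e) a2 (by omega)
  · have hMM : Q.card * m ≤ Q.card * m * (Q.card * m) := Nat.le_mul_self _
    obtain ⟨k', r, l⟩ := short hT hp h (Q.card * m * (Q.card * m)) (by rw [abs_le]; omega)
    obtain ⟨α, a1, a2⟩ := r.word
    have hL : α.length ≤ (Q.card + m) ^ 9 := by
      by_cases hN : 2 ≤ Q.card + m
      · have := bound_one l hN
        have := pow_nine hN
        omega
      · have e1 : Q.card = 1 := by omega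
        have e2 : m = 0 := by omega
        rw [e1, e2] at l
        simp at l
        omega
    refine ⟨(α, []), ⟨⟨p, q, ?_, ?_, by simp⟩, ?_, by simp [numCycles1]⟩, α,
      ⟨[], by simp [numCycles1], by simp [lpsWord1]⟩, a2⟩
    · simpa [lpsSupport1] using a2.1
    · simpa [lpsSupport1] using a2.2.1
    · simpa [lpsLen1, lpsSupport1] using hL

/-- The reachability relation of any 1-VASS is captured by a
finite set of linear path schemes of polynomial length with at most one cycle
each. -/
theorem statement10 :
    ∃ c : ℕ, ∀ (Q : Finset ℕ) (T : Finset Trans1),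
      (∀ t ∈ T, t.1 ∈ Q ∧ t.2.2 ∈ Q) →
      ∃ Y : Finset LPS1,
        (∀ ρ ∈ Y, ∃ p q, IsLPSFrom1 T p q ρ) ∧
        (∀ p ∈ Q, ∀ q ∈ Q, ∀ u v : ℤ, 0 ≤ u → 0 ≤ v →
          (Reach1 T NNeg p u q v ↔ SReach1 T Y NNeg p u q v)) ∧
        (∀ ρ ∈ Y, lpsLen1 ρ ≤ (Q.card + tnorm1 T) ^ c) ∧
        (∀ ρ ∈ Y, numCycles1 ρ ≤ 1) := by
  refine ⟨9, fun Q T hT => ?_⟩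
  have hOK : OK Q T (tnorm1 T) := by
    intro t ht
    refine ⟨(hT t ht).1, (hT t ht).2, ?_⟩
    have : t.2.1.natAbs ≤ tnorm1 T :=
      Finset.le_sup (f := fun t : Trans1 => t.2.1.natAbs) ht
    rw [abs_le]; omega
  have hfin := Yset_finite T ((Q.card + tnorm1 T) ^ 9)
  refine ⟨hfin.toFinset, ?_, ?_, ?_, ?_⟩
  · intro ρ hρ
    exact ((Set.Finite.mem_toFinset hfin).1 hρ).1
  · intro p hp q hq u v _ _
    constructor
    · rintro ⟨π, hπ⟩
      obtain ⟨ρ, h1, h2⟩ := main_dir hOK hp hq hπ.toRN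
      exact ⟨ρ, (Set.Finite.mem_toFinset hfin).2 h1, h2⟩
    · rintro ⟨ρ, _, π, _, h⟩
      exact ⟨π, h⟩
  · intro ρ hρ
    exact ((Set.Finite.mem_toFinset hfin).1 hρ).2.1
  · intro ρ hρ
    exact ((Set.Finite.mem_toFinset hfin).1 hρ).2.2

end VASS
end

section
/- There exists a constant c₀ ∈ ℕ such that for all d, k ≥ 1, every integer matrix A ∈ ℤ^{d×k}, and every c ∈ ℤ^d: if there exists x ∈ ℕ^k with A·x = c, then there exists e ∈ ℕ^k with A·e = c and ‖e‖ ≤ (‖A‖ + ‖c‖ + 1)^{c₀·d}. -/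
namespace ILP

/-- The norm of a vector of integers: maximum of absolute values. -/
def vnorm {m : ℕ} (v : Fin m → ℤ) : ℕ := Finset.univ.sup fun i => (v i).natAbs

/-- The norm of an integer matrix: number of columns times the maximal
absolute value of an entry. -/
def mnorm {d k : ℕ} (A : Matrix (Fin d) (Fin k) ℤ) : ℕ :=
  k * Finset.univ.sup fun p : Fin d × Fin k => (A p.1 p.2).natAbs

lemma exists_rows {d : ℕ} {S : Type*} [Fintype S] [DecidableEq S] (B : Matrix (Fin d) S ℚ)
    (h : LinearIndependent ℚ B.col) :
    ∃ ρ : S → Fin d, Function.Injective ρ ∧ (B.submatrix ρ id).det ≠ 0 := by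
  obtain ⟨κ, a, ha, hsp, hli⟩ := exists_linearIndependent' ℚ B.row
  have hr : B.rank = Fintype.card S := by
    rw [← Matrix.rank_transpose]
    exact LinearIndependent.rank_matrix (by simpa using h)
  have : Finite κ := Finite.of_injective a ha
  have := Fintype.ofFinite κ
  have hc : Fintype.card κ = Fintype.card S := by
    rw [← hr, Matrix.rank_eq_finrank_span_row, ← hsp, finrank_span_eq_card hli]
  obtain ⟨e⟩ := Fintype.card_eq.1 hc
  refine ⟨a ∘ e.symm, ha.comp e.symm.injective, ?_⟩
  have := hli.comp e.symm e.symm.injective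
  have h2 : LinearIndependent ℚ (B.submatrix (a ∘ e.symm) id).row := this
  rw [Matrix.linearIndependent_rows_iff_isUnit, Matrix.isUnit_iff_isUnit_det] at h2
  exact h2.ne_zero

lemma det_bound {d k a : ℕ} {S : Type*} [Fintype S] [DecidableEq S] (ha : 1 ≤ a)
    (B : Matrix S S ℤ) (hB : ∀ i j, |B i j| ≤ a) (hd : Fintype.card S ≤ d)
    (hk : Fintype.card S ≤ k) (hk1 : 1 ≤ k) : |B.det| ≤ ((k * a) ^ d : ℕ) := by
  have h1 := Matrix.det_le (abv := AbsoluteValue.abs) (A := B) (x := (a : ℤ)) hB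
  have h2 : (Fintype.card S).factorial * a ^ (Fintype.card S) ≤ (k * a) ^ d :=
    calc _ ≤ (Fintype.card S) ^ (Fintype.card S) * a ^ (Fintype.card S) := by
          gcongr; exact Nat.factorial_le_pow _
      _ = (Fintype.card S * a) ^ (Fintype.card S) := by rw [mul_pow]
      _ ≤ (k * a) ^ (Fintype.card S) := by gcongr
      _ ≤ (k * a) ^ d := Nat.pow_le_pow_right (Nat.mul_pos hk1 ha) hd
  refine h1.trans ?_
  rw [nsmul_eq_mul]
  exact_mod_cast h2

lemma left_inv {d k a : ℕ} (ha : 1 ≤ a) (hk1 : 1 ≤ k) (A : Matrix (Fin d) (Fin k) ℤ)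
    (hA : ∀ i j, |A i j| ≤ a) (S : Finset (Fin k))
    (h : LinearIndepOn ℚ (fun j => fun i => (A i j : ℚ)) (S : Set (Fin k))) :
    ∃ D : ℤ, D ≠ 0 ∧ |D| ≤ ((k * a) ^ d : ℕ) ∧ ∃ G : Fin k → Fin d → ℤ,
      (∀ j, ∑ i, |G j i| ≤ (k * (k * a) ^ d : ℕ)) ∧
      (∀ j, j ∉ S → G j = 0) ∧
      ∀ j ∈ S, ∀ j' ∈ S, ∑ i, G j i * A i j' = if j = j' then D else 0 := by
  classical
  let B : Matrix (Fin d) S ℤ := fun i j => A i j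
  obtain ⟨ρ, hρ, hdet⟩ := exists_rows (B.map (Int.cast : ℤ → ℚ)) h
  let C : Matrix S S ℤ := B.submatrix ρ id
  have hD : C.det ≠ 0 := by
    intro h0
    apply hdet
    have := congrArg (Int.cast : ℤ → ℚ) h0
    rw [Int.cast_det] at this
    exact this
  have hd : Fintype.card S ≤ d := by simpa using Fintype.card_le_of_injective ρ hρ
  have hk : Fintype.card S ≤ k := by
    simpa using Finset.card_le_univ S
  have hadj : ∀ s t, |C.adjugate s t| ≤ ((k * a) ^ d : ℕ) := by
    intro s t
    rw [Matrix.adjugate_apply]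
    apply det_bound ha _ _ hd hk hk1
    intro i j
    rw [Matrix.updateRow_apply]
    split_ifs
    · rw [Pi.single_apply]; split_ifs
      · simpa using ha
      · simp
    · exact hA _ _
  refine ⟨C.det, hD, det_bound ha C (fun i j => hA _ _) hd hk hk1,
    fun j i => if hj : j ∈ S then ∑ t : S, if ρ t = i then C.adjugate ⟨j, hj⟩ t else 0 else 0,
    ?_, ?_, ?_⟩
  · intro j
    by_cases hj : j ∈ S
    · simp only [hj, dite_true]
      calc _ ≤ ∑ i, ∑ t : S, |if ρ t = i then C.adjugate ⟨j, hj⟩ t else 0| :=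
            Finset.sum_le_sum fun i _ => Finset.abs_sum_le_sum_abs _ _
        _ = ∑ t : S, |C.adjugate ⟨j, hj⟩ t| := by
            rw [Finset.sum_comm]
            refine Finset.sum_congr rfl fun t _ => ?_
            rw [Finset.sum_eq_single (ρ t)]
            · simp
            · intro b _ hb; simp [hb.symm]
            · simp
        _ ≤ ∑ t : S, (((k * a) ^ d : ℕ) : ℤ) := Finset.sum_le_sum fun t _ => hadj _ _
        _ ≤ _ := by
            rw [Finset.sum_const, Finset.card_univ, nsmul_eq_mul]
            exact_mod_cast Nat.mul_le_mul_right _ hk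
    · simp only [hj, dite_false]; simp
      positivity
  · intro j hj
    funext i; simp [hj]
  · intro j hj j' hj'
    simp only [hj, dite_true, Finset.sum_mul]
    rw [Finset.sum_comm]
    have := congrFun (congrFun (Matrix.adjugate_mul C) ⟨j, hj⟩) ⟨j', hj'⟩
    rw [Matrix.mul_apply] at this
    simp only [Matrix.smul_apply, Matrix.one_apply, Subtype.mk.injEq, smul_eq_mul, mul_ite, mul_one, mul_zero] at this
    rw [← this]
    refine Finset.sum_congr rfl fun t _ => ?_
    simp only [ite_mul, zero_mul]
    rw [Finset.sum_ite_eq, if_pos (Finset.mem_univ _)]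
    rfl

lemma exists_circuit {d k : ℕ} (v : Fin k → Fin d → ℚ) (S : Finset (Fin k))
    (h : ¬ LinearIndepOn ℚ v (S : Set (Fin k))) :
    ∃ T : Finset (Fin k), T ⊆ S ∧ LinearIndepOn ℚ v (T : Set (Fin k)) ∧
      ∃ j ∈ S, j ∉ T ∧ v j ∈ Submodule.span ℚ (v '' (T : Set (Fin k))) := by
  induction S using Finset.induction_on with
  | empty => simp at h
  | insert j S hj ih =>
    by_cases hS : LinearIndepOn ℚ v (S : Set (Fin k))
    · refine ⟨S, Finset.subset_insert _ _, hS, j, Finset.mem_insert_self _ _, hj, ?_⟩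
      by_contra hn
      apply h
      rw [Finset.coe_insert, linearIndepOn_insert (by simpa using hj)]
      exact ⟨hS, hn⟩
    · obtain ⟨T, hT, hi, j', hj', r⟩ := ih hS
      exact ⟨T, hT.trans (Finset.subset_insert _ _), hi, j', Finset.mem_insert_of_mem hj', r⟩

lemma exists_ker {d k a : ℕ} (ha : 1 ≤ a) (hk1 : 1 ≤ k) (A : Matrix (Fin d) (Fin k) ℤ)
    (hA : ∀ i j, |A i j| ≤ a) (S : Finset (Fin k))
    (h : ¬ LinearIndepOn ℚ (fun j => fun i => (A i j : ℚ)) (S : Set (Fin k))) :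
    ∃ y : Fin k → ℤ, y ≠ 0 ∧ A.mulVec y = 0 ∧ (∀ j, j ∉ S → y j = 0) ∧
      ∀ j, |y j| ≤ (k * a * (k * a) ^ d : ℕ) := by
  classical
  obtain ⟨T, hTS, hT, j, hjS, hjT, hsp⟩ := exists_circuit _ S h
  obtain ⟨D, hD0, hD, G, hG, hG0, hGA⟩ := left_inv ha hk1 A hA T hT
  rw [Submodule.mem_span_image_finset_iff_exists_fun'] at hsp
  obtain ⟨w, hw⟩ := hsp
  have hw' : ∀ i, ∑ t ∈ T, w t * A i t = A i j := by
    intro i; simpa using congrFun hw i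
  have key : ∀ t ∈ T, ((∑ i, G t i * A i j : ℤ) : ℚ) = D * w t := by
    intro t ht
    push_cast
    simp only [← hw', Finset.mul_sum]
    rw [Finset.sum_comm]
    have : ∀ s ∈ T, ∑ i, (G t i : ℚ) * (w s * A i s) = if t = s then D * w s else 0 := by
      intro s hs
      have := congrArg (Int.cast : ℤ → ℚ) (hGA t ht s hs)
      push_cast at this
      calc _ = w s * ∑ i, (G t i : ℚ) * A i s := by
            rw [Finset.mul_sum]; exact Finset.sum_congr rfl fun i _ => by ring
        _ = _ := by rw [this]; split_ifs <;> ring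
    rw [Finset.sum_congr rfl this, Finset.sum_ite_eq, if_pos ht]
  have hGj : G j = 0 := hG0 j hjT
  refine ⟨fun t => if t = j then -D else ∑ i, G t i * A i j, ?_, ?_, ?_, ?_⟩
  · intro h0
    have := congrFun h0 j
    simp at this
    exact hD0 this
  · funext i
    have h1 : (A.mulVec fun t => if t = j then -D else ∑ i, G t i * A i j) i
        = -(D * A i j) + ∑ t ∈ T, A i t * ∑ i, G t i * A i j := by
      rw [Matrix.mulVec, dotProduct, ← Finset.add_sum_erase _ _ (Finset.mem_univ j)]
      congr 1
      · simp; ring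
      · symm
        have hsub : T ⊆ Finset.univ.erase j := fun t ht => by
          simp; rintro rfl; exact hjT ht
        rw [← Finset.sum_subset hsub]
        · refine Finset.sum_congr rfl fun t ht => ?_
          rw [if_neg]; rintro rfl; exact hjT ht
        · intro t ht htT
          rw [if_neg (by simpa using ht), hG0 t htT]; simp
    rw [h1]
    have : ((-(D * A i j) + ∑ t ∈ T, A i t * ∑ i, G t i * A i j : ℤ) : ℚ) = 0 := by
      rw [Int.cast_add, Int.cast_sum]
      have : ∀ t ∈ T, ((A i t * ∑ i, G t i * A i j : ℤ) : ℚ) = D * (w t * A i t) := by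
        intro t ht
        rw [Int.cast_mul, key t ht]; ring
      rw [Finset.sum_congr rfl this, ← Finset.mul_sum, hw']
      push_cast; ring
    exact_mod_cast this
  · intro t ht
    have : t ≠ j := by rintro rfl; exact ht hjS
    simp [this, hG0 t (fun h => ht (hTS h))]
  · intro t
    dsimp only
    split_ifs
    · rw [abs_neg]
      refine hD.trans ?_
      exact_mod_cast Nat.le_mul_of_pos_left _ (Nat.mul_pos hk1 ha)
    · calc _ ≤ ∑ i, |G t i * A i j| := Finset.abs_sum_le_sum_abs _ _
        _ ≤ ∑ i, |G t i| * a := Finset.sum_le_sum fun i _ => by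
            rw [abs_mul]; exact mul_le_mul_of_nonneg_left (hA _ _) (abs_nonneg _)
        _ = (∑ i, |G t i|) * a := by rw [Finset.sum_mul]
        _ ≤ (k * (k * a) ^ d : ℕ) * a := mul_le_mul_of_nonneg_right (hG t) (by positivity)
        _ = _ := by push_cast; ring

lemma lex_step {k : ℕ} (x : Fin k → ℕ) (y : Fin k → ℤ) (hy : y ≠ 0)
    (hxy : ∀ j, |y j| ≤ x j) : ∃ z : Fin k → ℕ, toLex z < toLex x ∧
      ((∀ j, (z j : ℤ) = x j - y j) ∨ (∀ j, (z j : ℤ) = x j + y j)) := by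
  have hne : (Finset.univ.filter fun j => y j ≠ 0).Nonempty := by
    by_contra hn
    apply hy
    rw [Finset.not_nonempty_iff_eq_empty, Finset.filter_eq_empty_iff] at hn
    funext j; simpa using hn (Finset.mem_univ j)
  set m := (Finset.univ.filter fun j => y j ≠ 0).min' hne with hm
  have hmy : y m ≠ 0 := by simpa using Finset.min'_mem _ hne
  have hlt : ∀ j < m, y j = 0 := by
    intro j hj
    by_contra h0
    exact absurd (Finset.min'_le (Finset.univ.filter fun j => y j ≠ 0) j (by simpa using h0)) (not_le.2 hj)
  have hb := fun j => abs_le.1 (hxy j)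
  rcases lt_or_gt_of_ne hmy with h | h
  · refine ⟨fun j => (x j + y j).toNat, ⟨m, ?_, ?_⟩, Or.inr fun j => ?_⟩
    · intro j hj; simp [hlt j hj]
    · have := hb m; simp; omega
    · have := hb j; simp; omega
  · refine ⟨fun j => (x j - y j).toNat, ⟨m, ?_, ?_⟩, Or.inl fun j => ?_⟩
    · intro j hj; simp [hlt j hj]
    · have := hb m; simp; omega
    · have := hb j; simp; omega

lemma core {d k a : ℕ} (ha : 1 ≤ a) (hk1 : 1 ≤ k) (A : Matrix (Fin d) (Fin k) ℤ)
    (hA : ∀ i j, |A i j| ≤ a) (c : Fin d → ℤ) (b : ℕ) (hc : ∀ i, |c i| ≤ b)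
    (hx : ∃ x : Fin k → ℕ, A.mulVec (fun j => (x j : ℤ)) = c) :
    ∃ e : Fin k → ℕ, A.mulVec (fun j => (e j : ℤ)) = c ∧
      ∀ j, e j ≤ k * a * (k * a) ^ d ∨
        e j ≤ k * (k * a) ^ d * (b + k * a * (k * a * (k * a) ^ d)) := by
  classical
  let Q : Set (Lex (Fin k → ℕ)) := {x | A.mulVec (fun j => (ofLex x j : ℤ)) = c}
  have hQ : Q.Nonempty := by obtain ⟨x, hx⟩ := hx; exact ⟨toLex x, hx⟩
  have wf : WellFounded ((· < ·) : Lex (Fin k → ℕ) → Lex (Fin k → ℕ) → Prop) := wellFounded_lt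
  obtain ⟨x, hx', hmin⟩ : ∃ x : Fin k → ℕ, toLex x ∈ Q ∧ ∀ z ∈ Q, ¬ z < toLex x := by
    obtain ⟨x', hx', hmin⟩ := wf.has_min Q hQ
    exact ⟨ofLex x', hx', hmin⟩
  have hx' : A.mulVec (fun j => (x j : ℤ)) = c := hx'
  refine ⟨x, hx', ?_⟩
  set M := k * a * (k * a) ^ d with hM
  let S : Finset (Fin k) := Finset.univ.filter fun j => M < x j
  have hS : LinearIndepOn ℚ (fun j => fun i => (A i j : ℚ)) (S : Set (Fin k)) := by
    by_contra hn
    obtain ⟨y, hy0, hAy, hyS, hyb⟩ := exists_ker ha hk1 A hA S hn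
    have hxy : ∀ j, |y j| ≤ x j := by
      intro j
      by_cases hj : j ∈ S
      · have h1 : M < x j := by simpa [S] using hj
        refine (hyb j).trans ?_
        exact_mod_cast h1.le
      · simp [hyS j hj]
    obtain ⟨z, hz, hz'⟩ := lex_step x y hy0 hxy
    refine hmin (toLex z) ?_ hz
    change A.mulVec (fun j => (z j : ℤ)) = c
    rcases hz' with hz' | hz'
    · have : (fun j => (z j : ℤ)) = (fun j => (x j : ℤ)) - y := by
        funext j; exact hz' j
      rw [this, Matrix.mulVec_sub, hAy, hx', sub_zero]
    · have : (fun j => (z j : ℤ)) = (fun j => (x j : ℤ)) + y := by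
        funext j; exact hz' j
      rw [this, Matrix.mulVec_add, hAy, hx', add_zero]
  obtain ⟨D, hD0, hD, G, hG, hG0, hGA⟩ := left_inv ha hk1 A hA S hS
  intro j
  by_cases hj : j ∈ S
  swap
  · left; simpa [S] using hj
  right
  let r : Fin d → ℤ := fun i => ∑ s ∈ S, A i s * x s
  have hr : ∀ i, r i = c i - ∑ s ∈ Sᶜ, A i s * x s := by
    intro i
    have := congrFun hx' i
    rw [Matrix.mulVec, dotProduct, ← Finset.sum_add_sum_compl S] at this
    simp only [r]; linarith
  have hrb : ∀ i, |r i| ≤ (b + k * a * M : ℕ) := by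
    intro i
    rw [hr]
    refine (abs_sub _ _).trans ?_
    push_cast
    refine add_le_add (hc i) ?_
    calc _ ≤ ∑ s ∈ Sᶜ, |A i s * x s| := Finset.abs_sum_le_sum_abs _ _
      _ ≤ ∑ s ∈ Sᶜ, ((a * M : ℕ) : ℤ) := Finset.sum_le_sum fun s hs => by
          rw [abs_mul]
          push_cast
          have h1 : x s ≤ M := by simpa [S] using hs
          refine mul_le_mul (hA _ _) ?_ (abs_nonneg _) (by positivity)
          rw [Nat.abs_cast]; exact_mod_cast h1
      _ ≤ _ := by
          rw [Finset.sum_const, nsmul_eq_mul]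
          have : Sᶜ.card ≤ k := by simpa using Finset.card_le_univ Sᶜ
          have := Nat.mul_le_mul_right (a * M) this
          rw [mul_assoc]
          exact_mod_cast this
  have hDx : D * x j = ∑ i, G j i * r i := by
    simp only [r, Finset.mul_sum]
    rw [Finset.sum_comm]
    have : ∀ s ∈ S, ∑ i, G j i * (A i s * x s) = if j = s then D * x s else 0 := by
      intro s hs
      simp only [← mul_assoc]
      rw [← Finset.sum_mul, hGA j hj s hs]
      split_ifs <;> simp
    rw [Finset.sum_congr rfl this, Finset.sum_ite_eq, if_pos hj]
  have : (x j : ℤ) ≤ (k * (k * a) ^ d * (b + k * a * M) : ℕ) :=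
    calc (x j : ℤ) ≤ |D| * x j := le_mul_of_one_le_left (by positivity) (Int.one_le_abs hD0)
      _ = |D * x j| := by rw [abs_mul, Nat.abs_cast]
      _ = |∑ i, G j i * r i| := by rw [hDx]
      _ ≤ ∑ i, |G j i * r i| := Finset.abs_sum_le_sum_abs _ _
      _ ≤ ∑ i, |G j i| * (b + k * a * M : ℕ) := Finset.sum_le_sum fun i _ => by
          rw [abs_mul]; exact mul_le_mul_of_nonneg_left (hrb _) (abs_nonneg _)
      _ = (∑ i, |G j i|) * (b + k * a * M : ℕ) := by rw [Finset.sum_mul]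
      _ ≤ (k * (k * a) ^ d : ℕ) * (b + k * a * M : ℕ) :=
          mul_le_mul_of_nonneg_right (hG j) (by positivity)
      _ = _ := by push_cast; ring
  exact_mod_cast this

/-- A feasible system of linear Diophantine equations
`A·x = c` has a solution over ℕ of norm at most `(‖A‖ + ‖c‖ + 1)^{c₀·d}`. -/
theorem statement12 :
    ∃ c₀ : ℕ, ∀ d k : ℕ, 1 ≤ d → 1 ≤ k →
      ∀ (A : Matrix (Fin d) (Fin k) ℤ) (c : Fin d → ℤ),
        (∃ x : Fin k → ℕ, A.mulVec (fun j => (x j : ℤ)) = c) →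
        ∃ e : Fin k → ℕ, A.mulVec (fun j => (e j : ℤ)) = c ∧
          (Finset.univ.sup fun j => e j) ≤ (mnorm A + vnorm c + 1) ^ (c₀ * d) := by
  refine ⟨5, fun d k hd hk A c hx => ?_⟩
  set a := Finset.univ.sup fun p : Fin d × Fin k => (A p.1 p.2).natAbs with ha
  have hm : mnorm A = k * a := rfl
  have hA : ∀ i j, |A i j| ≤ a := by
    intro i j
    have : (A i j).natAbs ≤ a :=
      Finset.le_sup (f := fun p : Fin d × Fin k => (A p.1 p.2).natAbs) (Finset.mem_univ (i, j))
    rw [Int.abs_eq_natAbs]; exact_mod_cast this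
  have hc : ∀ i, |c i| ≤ vnorm c := by
    intro i
    have : (c i).natAbs ≤ vnorm c :=
      Finset.le_sup (f := fun i => (c i).natAbs) (Finset.mem_univ i)
    rw [Int.abs_eq_natAbs]; exact_mod_cast this
  rcases Nat.eq_zero_or_pos a with h0 | hpos
  · have hA0 : A = 0 := by
      ext i j
      have := hA i j
      rw [h0] at this
      simpa using this
    refine ⟨0, ?_, by simp⟩
    obtain ⟨x, hx⟩ := hx
    rw [← hx, hA0]; simp
  obtain ⟨e, he, hb⟩ := core hpos hk A hA c (vnorm c) hc hx
  refine ⟨e, he, Finset.sup_le fun j _ => ?_⟩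
  rw [hm]
  set b := vnorm c
  set N := k * a + b + 1 with hN
  have hN1 : 1 ≤ N := by omega
  have hq : k * a ≤ N := by omega
  have hkN : k ≤ N := (Nat.le_mul_of_pos_right k hpos).trans hq
  have hM : k * a * (k * a) ^ d ≤ N ^ (d + 1) := by
    rw [← pow_succ']; gcongr
  rcases hb j with h | h
  · exact (h.trans hM).trans (Nat.pow_le_pow_right hN1 (by omega))
  · refine h.trans ?_
    have h1 : b + k * a * (k * a * (k * a) ^ d) ≤ N ^ (d + 2) :=
      calc _ ≤ b * N ^ (d + 1) + k * a * N ^ (d + 1) :=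
            add_le_add (Nat.le_mul_of_pos_right _ (by positivity)) (by gcongr)
        _ = (b + k * a) * N ^ (d + 1) := by ring
        _ ≤ N * N ^ (d + 1) := by gcongr; omega
        _ = _ := by ring
    calc _ ≤ N * N ^ d * N ^ (d + 2) := by gcongr
      _ = N ^ (2 * d + 3) := by ring
      _ ≤ _ := Nat.pow_le_pow_right hN1 (by omega)

end ILP
end

section
/- Let V = (Q,T) be a d-VASS, let u ∈ ℕ^d, let q ∈ Q and let β ∈ T^m be a cycle from q to q. Then there exist vectors a, c ∈ ℤ^{d+1} with ‖a‖ ≤ max(1, m·‖T‖) and ‖c‖ ≤ 2·m·‖T‖ + ‖u‖ + 1 such that for every e ∈ ℕ: (a_i·e ≥ c_i holds for all 1 ≤ i ≤ d+1) if and only if (e ≥ 1 and q(u) →^{β^e}_{ℕ^d} q(u + e·δ(β))). -/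
namespace VASS

/-- Integer vectors of dimension `d`. -/
abbrev Vec (d : ℕ) := Fin d → ℤ

/-- A transition of a `d`-VASS: source state, update vector, target state. -/
abbrev Trans (d : ℕ) := ℕ × Vec d × ℕ

/-- The norm of a vector: maximum of absolute values of its components. -/
def vnorm {d : ℕ} (z : Vec d) : ℕ := Finset.univ.sup fun i => (z i).natAbs

/-- The norm of a transition set. -/
def tnorm {d : ℕ} (T : Finset (Trans d)) : ℕ := T.sup fun t => vnorm t.2.1

/-- The displacement of a word of transitions. -/
def disp {d : ℕ} (π : List (Trans d)) : Vec d := (π.map fun t => t.2.1).sum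

/-- `IsPathFrom p q π` : `π` is a path from `p` to `q`. -/
def IsPathFrom {d : ℕ} : ℕ → ℕ → List (Trans d) → Prop
  | p, q, [] => p = q
  | p, q, t :: rest => t.1 = p ∧ IsPathFrom t.2.2 q rest

/-- ℕ^d as a subset of ℤ^d. -/
def NatSet (d : ℕ) : Set (Vec d) := {v | ∀ i, 0 ≤ v i}

/-- `p(u) →^π_A q(v)`. -/
def Run {d : ℕ} (T : Finset (Trans d)) (A : Set (Vec d)) (p : ℕ) (u : Vec d)
    (q : ℕ) (v : Vec d) (π : List (Trans d)) : Prop :=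
  (∀ t ∈ π, t ∈ T) ∧ IsPathFrom p q π ∧ u ∈ A ∧ v = u + disp π ∧
    ∀ i, 1 ≤ i → i ≤ π.length → u + disp (π.take i) ∈ A

/-- `p(u) →*_A q(v)`. -/
def Reach {d : ℕ} (T : Finset (Trans d)) (A : Set (Vec d)) (p : ℕ) (u : Vec d)
    (q : ℕ) (v : Vec d) : Prop := ∃ π, Run T A p u q v π

/-- A linear path scheme `α₀ β₁* α₁ ⋯ β_k* α_k`, presented as the initial
segment `α₀` together with the list of pairs `(βᵢ, αᵢ)`. -/
abbrev LPS (d : ℕ) := List (Trans d) × List (List (Trans d) × List (Trans d))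

/-- The underlying word `α₀ β₁ α₁ ⋯ β_k α_k` of a linear path scheme. -/
def lpsSupport {d : ℕ} (ρ : LPS d) : List (Trans d) :=
  ρ.1 ++ (ρ.2.map fun s => s.1 ++ s.2).flatten

/-- The length of a linear path scheme. -/
def lpsLen {d : ℕ} (ρ : LPS d) : ℕ := (lpsSupport ρ).length

/-- The number of cycles of a linear path scheme. -/
def numCycles {d : ℕ} (ρ : LPS d) : ℕ := ρ.2.length

/-- `ρ` is a linear path scheme from `p` to `q` over the transition set `T`:
its underlying word uses transitions from `T` and is a path from `p` to `q`,
and each `βᵢ` is a cycle. -/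
def IsLPSFrom {d : ℕ} (T : Finset (Trans d)) (p q : ℕ) (ρ : LPS d) : Prop :=
  (∀ t ∈ lpsSupport ρ, t ∈ T) ∧ IsPathFrom p q (lpsSupport ρ) ∧
    ∀ s ∈ ρ.2, s.1 ≠ [] ∧ ∃ r, IsPathFrom r r s.1

/-- The word `α₀ β₁^{e₁} α₁ ⋯ β_k^{e_k} α_k` of a linear path scheme. -/
def lpsWord {d : ℕ} (ρ : LPS d) (e : List ℕ) : List (Trans d) :=
  ρ.1 ++ (List.zipWith (fun s n => (List.replicate n s.1).flatten ++ s.2) ρ.2 e).flatten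

/-- Membership in the language of a linear path scheme. -/
def InLang {d : ℕ} (ρ : LPS d) (π : List (Trans d)) : Prop :=
  ∃ e : List ℕ, e.length = numCycles ρ ∧ π = lpsWord ρ e

/-- `p(u) →^S_A q(v)` for a finite set `S` of linear path schemes. -/
def SReach {d : ℕ} (T : Finset (Trans d)) (S : Finset (LPS d)) (A : Set (Vec d))
    (p : ℕ) (u : Vec d) (q : ℕ) (v : Vec d) : Prop :=
  ∃ ρ ∈ S, ∃ π, InLang ρ π ∧ Run T A p u q v π

/-- δ(ρ): the set of displacements of words in the language of `ρ`. -/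
def DispSet {d : ℕ} (ρ : LPS d) : Set (Vec d) := {z | ∃ π, InLang ρ π ∧ z = disp π}

/-- A quadrant of ℤ². -/
def IsQuadrant (Z : Set (Vec 2)) : Prop :=
  ∃ ε : Fin 2 → Bool, Z = {v | ∀ i, if ε i then 0 ≤ v i else v i ≤ 0}

/-- A linear path scheme is zigzag-free if the displacements of all its cycles
lie in a single quadrant. -/
def ZigzagFree (ρ : LPS 2) : Prop :=
  ∃ Z, IsQuadrant Z ∧ ∀ s ∈ ρ.2, disp s.1 ∈ Z

lemma disp_append {d : ℕ} (x y : List (Trans d)) : disp (x ++ y) = disp x + disp y := by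
  simp [disp]

lemma disp_rep {d : ℕ} (β : List (Trans d)) (k : ℕ) :
    disp ((List.replicate k β).flatten) = (k : ℤ) • disp β := by
  induction k with
  | zero => simp [disp]
  | succ k ih =>
    rw [List.replicate_succ, List.flatten_cons, disp_append, ih]
    push_cast
    rw [add_smul, one_smul, add_comm]

lemma path_append_s13 {d : ℕ} (x y : List (Trans d)) (p q r : ℕ) (h1 : IsPathFrom p q x)
    (h2 : IsPathFrom q r y) : IsPathFrom p r (x ++ y) := by
  induction x generalizing p with
  | nil => simp only [IsPathFrom] at h1; subst h1; simpa using h2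
  | cons t x ih => exact ⟨h1.1, ih _ h1.2⟩

lemma path_rep {d : ℕ} (β : List (Trans d)) (q : ℕ) (h : IsPathFrom q q β) (k : ℕ) :
    IsPathFrom q q ((List.replicate k β).flatten) := by
  induction k with
  | zero => simp [IsPathFrom]
  | succ k ih =>
    rw [List.replicate_succ, List.flatten_cons]
    exact path_append_s13 _ _ _ _ _ h ih

lemma take_rep {d : ℕ} (β : List (Trans d)) (e k i : ℕ) (hk : k < e) (hi : i ≤ β.length) :
    ((List.replicate e β).flatten).take (k * β.length + i)
      = (List.replicate k β).flatten ++ β.take i := by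
  obtain ⟨r, rfl⟩ : ∃ r, e = k + (r + 1) := ⟨e - k - 1, by omega⟩
  have hl : ((List.replicate k β).flatten).length = k * β.length := by simp
  rw [List.replicate_add, List.flatten_append, ← hl, List.take_length_add_append,
    List.replicate_succ, List.flatten_cons, List.take_append_of_le_length hi]

lemma disp_bound {d : ℕ} (T : Finset (Trans d)) (β : List (Trans d)) (h : ∀ t ∈ β, t ∈ T)
    (j : Fin d) : |disp β j| ≤ (β.length * tnorm T : ℕ) := by
  induction β with
  | nil => simp [disp]
  | cons t x ih =>
    have h1 := ih (fun s hs => h s (List.mem_cons_of_mem _ hs))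
    have h2 : (t.2.1 j).natAbs ≤ tnorm T :=
      le_trans (Finset.le_sup (f := fun i => (t.2.1 i).natAbs) (Finset.mem_univ j))
        (Finset.le_sup (f := fun t : Trans d => vnorm t.2.1) (h t List.mem_cons_self))
    have h3 : disp (t :: x) j = t.2.1 j + disp x j := by simp [disp]
    have h4 : |t.2.1 j| ≤ (tnorm T : ℤ) := by rw [Int.abs_eq_natAbs]; exact_mod_cast h2
    rw [h3]
    refine (abs_add_le _ _).trans ?_
    push_cast at h1 ⊢
    simp only [List.length_cons]
    push_cast
    linarith

theorem statement13 (d : ℕ) (Q : Finset ℕ) (T : Finset (Trans d))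
    (hT : ∀ t ∈ T, t.1 ∈ Q ∧ t.2.2 ∈ Q)
    (u : Vec d) (hu : u ∈ NatSet d) (q : ℕ) (hq : q ∈ Q)
    (m : ℕ) (β : List (Trans d)) (hβT : ∀ t ∈ β, t ∈ T)
    (hm : β.length = m) (hcyc : IsPathFrom q q β) (hne : β ≠ []) :
    ∃ a c : Fin (d + 1) → ℤ,
      vnorm a ≤ max 1 (m * tnorm T) ∧
      vnorm c ≤ 2 * m * tnorm T + vnorm u + 1 ∧
      ∀ e : ℕ, (∀ i, c i ≤ a i * (e : ℤ)) ↔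
        (1 ≤ e ∧
          Run T (NatSet d) q u q (u + (e : ℤ) • disp β)
            ((List.replicate e β).flatten)) := by
  have hmpos : 0 < m := by rw [← hm]; exact List.length_pos_iff.mpr hne
  have hmin : ∀ j : Fin d, ∃ i, i ≤ m ∧ ∀ i', i' ≤ m →
      disp (β.take i) j ≤ disp (β.take i') j := by
    intro j
    obtain ⟨i, hi, h⟩ := Finset.exists_min_image (Finset.range (m + 1))
      (fun i => disp (β.take i) j) ⟨0, by simp⟩
    refine ⟨i, by simpa [Nat.lt_succ_iff] using hi, fun i' hi' => h i' ?_⟩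
    simpa [Nat.lt_succ_iff] using hi'
  choose I hI hImin using hmin
  have hpb : ∀ i j, |disp (β.take i) j| ≤ (m * tnorm T : ℕ) := by
    intro i j
    refine (disp_bound T (β.take i) (fun t ht => hβT t (List.mem_of_mem_take ht)) j).trans ?_
    have : (β.take i).length ≤ m := by rw [← hm]; simp
    exact_mod_cast Nat.mul_le_mul_right _ this
  have hDb : ∀ j, |disp β j| ≤ (m * tnorm T : ℕ) := by
    intro j
    have := hpb m j
    rwa [← hm, List.take_length, hm] at this
  have hub : ∀ j, |u j| ≤ (vnorm u : ℤ) := by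
    intro j
    rw [Int.abs_eq_natAbs]
    exact_mod_cast Finset.le_sup (f := fun i => (u i).natAbs) (Finset.mem_univ j)
  refine ⟨Fin.cons 1 (fun j => min (disp β j) 0),
    Fin.cons 1 (fun j => min (disp β j) 0 - u j - disp (β.take (I j)) j), ?_, ?_, ?_⟩
  · refine Finset.sup_le fun i _ => ?_
    refine Fin.cases ?_ (fun j => ?_) i
    · simp
    · have := hDb j
      simp only [Fin.cons_succ]
      rw [abs_le] at this
      generalize m * tnorm T = M at *
      omega
  · refine Finset.sup_le fun i _ => ?_
    refine Fin.cases ?_ (fun j => ?_) i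
    · simp
    · have h1 := hDb j
      have h2 := hpb (I j) j
      have h3 := hub j
      simp only [Fin.cons_succ]
      rw [abs_le] at h1 h2 h3
      rw [mul_assoc]
      generalize m * tnorm T = M at *
      omega
  · intro e
    rw [Fin.forall_fin_succ]
    simp only [Fin.cons_zero, Fin.cons_succ, one_mul]
    have hlen : ((List.replicate e β).flatten).length = e * m := by simp [hm]
    constructor
    · rintro ⟨he, h⟩
      have he' : 1 ≤ e := by exact_mod_cast he
      refine ⟨he', ?_, path_rep β q hcyc e, hu, by rw [disp_rep], ?_⟩
      · intro t ht
        obtain ⟨l, hl, htl⟩ := List.mem_flatten.mp ht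
        rw [List.eq_of_mem_replicate hl] at htl
        exact hβT t htl
      · intro n hn1 hn2 j
        rw [hlen] at hn2
        have hk : (n - 1) / m < e := by
          rw [Nat.div_lt_iff_lt_mul hmpos]; omega
        have hi : (n - 1) % m + 1 ≤ m := Nat.mod_lt _ hmpos
        have hn : n = (n - 1) / m * m + ((n - 1) % m + 1) := by
          have := Nat.div_add_mod' (n - 1) m
          omega
        generalize (n - 1) / m = k at *
        generalize (n - 1) % m + 1 = i at *
        subst hm
        rw [hn, take_rep β e k i hk hi, disp_append, disp_rep]
        have h1 := h j
        have h2 := hImin j i hi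
        simp only [Pi.add_apply, Pi.smul_apply, smul_eq_mul]
        have hk' : (k : ℤ) ≤ e - 1 := by omega
        have hk0 : (0 : ℤ) ≤ k := by omega
        have h3 : min (disp β j) 0 * ((e : ℤ) - 1) ≤ k * disp β j := by
          rcases le_total (disp β j) 0 with h0 | h0
          · rw [min_eq_left h0]; nlinarith
          · rw [min_eq_right h0, zero_mul]; positivity
        linarith
    · rintro ⟨he, -, -, -, -, h⟩
      refine ⟨by exact_mod_cast he, fun j => ?_⟩
      have key : ∀ k < e, 0 ≤ u j + (k * disp β j + disp (β.take (I j)) j) := by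
        intro k hk
        by_cases h0 : k * m + I j = 0
        · obtain ⟨h1, h2⟩ := Nat.add_eq_zero_iff.mp h0
          have hk0 : k = 0 := by
            rcases Nat.mul_eq_zero.mp h1 with h | h <;> omega
          rw [h2, hk0]
          simpa [disp] using hu j
        · have hle : k * m + I j ≤ e * m := by
            have := Nat.mul_le_mul_right m (Nat.succ_le_of_lt hk)
            have := hI j
            rw [Nat.succ_mul] at *
            omega
          have := h (k * m + I j) (by omega) (by rw [hlen]; exact hle) j
          rw [← hm, take_rep β e k (I j) hk (by rw [hm]; exact hI j), disp_append,
            disp_rep] at this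
          simpa using this
      rcases le_total (disp β j) 0 with h0 | h0
      · rw [min_eq_left h0]
        have := key (e - 1) (by omega)
        push_cast [Nat.cast_sub he] at this
        linarith
      · rw [min_eq_right h0]
        have := key 0 (by omega)
        simp only [Nat.cast_zero, zero_mul] at this ⊢
        linarith

end VASS
end
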